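/- Let N ≥ 1, c ≠ 0, c₀, C ∈ ℝ, ω ≠ 0, and let m, n be positive integers with k = m/n. Let L be a smooth function on the extended phase space ℝ^{2N+2} depending on (q,p) only with 2(cL + c₀) > 0 everywhere, and set M = k·√(2(cL + c₀)). Let γ be a smooth nonvanishing solution of γ' + cγ² + C = 0 on an open interval I. Suppose G^+ and G^− are smooth complex-valued functions depending on (q,p) only that satisfy X_L G^± = ±(i/k)·M·G^± (i.e. X_L G^± = ±√(−2(cL+c₀))·G^±). Define H = (1/2)p_u² + (1/2)(γ² + C/c)·M² + ω²/(2γ²) − (C/c)·k²c₀, A^± = ∓(i/√2)·p_u + ω/(√2·γ) − (M/√2)·γ, D^± = ∓(i/γ)·p_u + ω/γ² − H/ω − (C/(cω))·(c₀k² − M²/2), and X^± = (G^±)^{2n}·(A^∓)^{2m}·(D^±)^m. Then {H, X^+} = 0 and {H, X^−} = 0 at every point with u ∈ I. -/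

import Mathlib

/-!
Extended phase space ℝ^{2N+2} with coordinates (u, q, p_u, p); the canonical
Poisson bracket (sign convention {q^i, p_i} = -1) is extended ℂ-bilinearly to
smooth complex-valued functions, and X_L F = {L, F}.
-/

noncomputable section

/-- The extended phase space: a point is `(u, q, p_u, p)`. -/
abbrev PS (N : ℕ) : Type := ℝ × (Fin N → ℝ) × ℝ × (Fin N → ℝ)

/-- Partial derivative with respect to `u` (complex-valued functions). -/
def pdu {N : ℕ} (F : PS N → ℂ) (x : PS N) : ℂ :=
  deriv (fun t => F (t, x.2.1, x.2.2.1, x.2.2.2)) x.1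

/-- Partial derivative with respect to `p_u`. -/
def pdpu {N : ℕ} (F : PS N → ℂ) (x : PS N) : ℂ :=
  deriv (fun t => F (x.1, x.2.1, t, x.2.2.2)) x.2.2.1

/-- Partial derivative with respect to `q^i`. -/
def pdq {N : ℕ} (i : Fin N) (F : PS N → ℂ) (x : PS N) : ℂ :=
  deriv (fun t => F (x.1, Function.update x.2.1 i t, x.2.2.1, x.2.2.2)) (x.2.1 i)

/-- Partial derivative with respect to `p_i`. -/
def pdp {N : ℕ} (i : Fin N) (F : PS N → ℂ) (x : PS N) : ℂ :=
  deriv (fun t => F (x.1, x.2.1, x.2.2.1, Function.update x.2.2.2 i t)) (x.2.2.2 i)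

/-- The canonical Poisson bracket (sign convention `{q^i, p_i} = -1`), extended
ℂ-bilinearly to complex-valued functions. -/
def pbracket {N : ℕ} (F H : PS N → ℂ) (x : PS N) : ℂ :=
  (pdpu F x * pdu H x - pdu F x * pdpu H x)
    + ∑ i : Fin N, (pdp i F x * pdq i H x - pdq i F x * pdp i H x)

/-- The Hamiltonian vector field of `L` applied to `F`: `X_L F = {L, F}`. -/
def XL {N : ℕ} (L : PS N → ℂ) (F : PS N → ℂ) : PS N → ℂ :=
  fun x => pbracket L F x

/-- Derivatives of the three building blocks along a curve. -/
lemma aux_der (c C ω k c₀ e r : ℂ) (hω : ω ≠ 0) (hr : r ≠ 0) (g p M : ℝ → ℂ) (g' p' M' : ℂ) (t : ℝ)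
    (hg : HasDerivAt g g' t) (hp : HasDerivAt p p' t) (hM : HasDerivAt M M' t) (h0 : g t ≠ 0) :
    HasDerivAt (fun s => (1 / 2) * p s ^ 2 + (1 / 2) * (g s ^ 2 + C / c) * M s ^ 2
        + ω ^ 2 / (2 * g s ^ 2) - (C / c) * k ^ 2 * c₀)
      (p t * p' + g t * g' * M t ^ 2 + (g t ^ 2 + C / c) * M t * M' - ω ^ 2 * g' / g t ^ 3) t ∧
    HasDerivAt (fun s => (e / r) * p s + ω / (r * g s) - (M s / r) * g s)
      ((e * p' - ω * g' / g t ^ 2 - M' * g t - M t * g') / r) t ∧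
    HasDerivAt (fun s => -(e / g s) * p s + ω / g s ^ 2
        - ((1 / 2) * p s ^ 2 + (1 / 2) * (g s ^ 2 + C / c) * M s ^ 2
        + ω ^ 2 / (2 * g s ^ 2) - (C / c) * k ^ 2 * c₀) / ω
        - (C / (c * ω)) * (c₀ * k ^ 2 - M s ^ 2 / 2))
      (e * g' / g t ^ 2 * p t - e / g t * p' - 2 * ω * g' / g t ^ 3
        - (p t * p' + g t * g' * M t ^ 2 + (g t ^ 2 + C / c) * M t * M' - ω ^ 2 * g' / g t ^ 3) / ω
        + C / (c * ω) * M t * M') t := by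
  have h1 : HasDerivAt (fun s => (1 / 2) * p s ^ 2 + (1 / 2) * (g s ^ 2 + C / c) * M s ^ 2
        + ω ^ 2 / (2 * g s ^ 2) - (C / c) * k ^ 2 * c₀)
      (p t * p' + g t * g' * M t ^ 2 + (g t ^ 2 + C / c) * M t * M' - ω ^ 2 * g' / g t ^ 3) t := by
    have := (((((hp.fun_pow 2).const_mul (1/2)).fun_add ((((hg.fun_pow 2).add_const (C / c)).const_mul
      (1/2)).fun_mul (hM.fun_pow 2))).fun_add ((hasDerivAt_const t (ω ^ 2)).fun_div
      ((hg.fun_pow 2).const_mul 2) (by simpa using h0)))).sub_const ((C / c) * k ^ 2 * c₀)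
    refine this.congr_deriv ?_
    generalize C / c = y
    field_simp
    push_cast
    ring
  refine ⟨h1, ?_, ?_⟩
  · have := ((hp.const_mul (e / r)).fun_add ((hasDerivAt_const t ω).fun_div (hg.const_mul r)
      (by simp [hr, h0]))).fun_sub ((hM.div_const r).fun_mul hg)
    refine this.congr_deriv ?_
    field_simp
    ring
  · have := (((((hasDerivAt_const t e).fun_div hg h0).fun_neg.fun_mul hp).fun_add
      ((hasDerivAt_const t ω).fun_div (hg.fun_pow 2) (by simpa using h0))).fun_sub
      (h1.div_const ω)).fun_sub
      ((((hM.fun_pow 2).div_const 2).const_sub (c₀ * k ^ 2)).const_mul (C / (c * ω)))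
    refine this.congr_deriv ?_
    generalize (p t * p' + g t * g' * M t ^ 2 + (g t ^ 2 + C / c) * M t * M' - ω ^ 2 * g' / g t ^ 3) / ω = z
    generalize C / (c * ω) = y
    field_simp
    push_cast
    ring

lemma aux_X (n m : ℕ) (G A D : ℝ → ℂ) (G' A' D' : ℂ) (t : ℝ)
    (hG : HasDerivAt G G' t) (hA : HasDerivAt A A' t) (hD : HasDerivAt D D' t) :
    HasDerivAt (fun s => G s ^ (2 * n) * A s ^ (2 * m) * D s ^ m)
      (((2 * n : ℕ) * G t ^ (2 * n - 1) * A t ^ (2 * m) * D t ^ m) * G' +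
       (G t ^ (2 * n) * ((2 * m : ℕ) * A t ^ (2 * m - 1)) * D t ^ m) * A' +
       (G t ^ (2 * n) * A t ^ (2 * m) * (m * D t ^ (m - 1))) * D') t := by
  refine (((hG.fun_pow (2 * n)).fun_mul (hA.fun_pow (2 * m))).fun_mul (hD.fun_pow m)).congr_deriv ?_
  ring

lemma aux_M (c c₀ k : ℝ) (hk : k ≠ 0) (L : ℝ → ℝ) (L' : ℝ) (t : ℝ) (hL : HasDerivAt L L' t)
    (hpos : 0 < 2 * (c * L t + c₀)) :
    HasDerivAt (fun s => ((k * Real.sqrt (2 * (c * L s + c₀)) : ℝ) : ℂ))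
      ((k : ℂ) ^ 2 * c * L' / ((k * Real.sqrt (2 * (c * L t + c₀)) : ℝ) : ℂ)) t := by
  have h := ((((hL.const_mul c).add_const c₀).const_mul 2).sqrt hpos.ne').const_mul k
  refine h.ofReal_comp.congr_deriv ?_
  have : Real.sqrt (2 * (c * L t + c₀)) ≠ 0 := (Real.sqrt_pos.2 hpos).ne'
  norm_cast
  field_simp

/-- One sign (`e = ± i`) of the theorem. -/
lemma aux_main
    (N : ℕ) (c c₀ C ω : ℝ) (hc : c ≠ 0) (hω : ω ≠ 0)
    (m n : ℕ) (hm : 0 < m) (hn : 0 < n) (k : ℝ) (hk : k = (m : ℝ) / (n : ℝ))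
    (L : PS N → ℝ) (hLsmooth : ContDiff ℝ (⊤ : ℕ∞) L)
    (hLqp : ∀ (u u' pu pu' : ℝ) (q p : Fin N → ℝ),
      L (u, q, pu, p) = L (u', q, pu', p))
    (hLpos : ∀ x : PS N, 0 < 2 * (c * L x + c₀))
    (M : PS N → ℝ) (hM : ∀ x : PS N, M x = k * Real.sqrt (2 * (c * L x + c₀)))
    (γ : ℝ → ℝ) (hγ : ContDiff ℝ (⊤ : ℕ∞) γ)
    (e : ℂ) (he : e ^ 2 = -1)
    (G : PS N → ℂ) (hGsmooth : ContDiff ℝ (⊤ : ℕ∞) G)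
    (hGqp : ∀ (u u' pu pu' : ℝ) (q p : Fin N → ℝ),
      G (u, q, pu, p) = G (u', q, pu', p))
    (hladder : ∀ x : PS N,
      XL (fun y => (L y : ℂ)) G x = (e / (k : ℂ)) * (M x : ℂ) * G x)
    (H : PS N → ℂ)
    (hH : ∀ x : PS N, H x =
      (((1 / 2) * x.2.2.1 ^ 2 + (1 / 2) * (γ x.1 ^ 2 + C / c) * M x ^ 2
        + ω ^ 2 / (2 * γ x.1 ^ 2) - (C / c) * k ^ 2 * c₀ : ℝ) : ℂ))
    (A D : PS N → ℂ)
    (hA : ∀ x : PS N, A x = (e / (Real.sqrt 2 : ℂ)) * (x.2.2.1 : ℂ)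
      + (ω : ℂ) / ((Real.sqrt 2 : ℂ) * (γ x.1 : ℂ)) - ((M x : ℂ) / (Real.sqrt 2 : ℂ)) * (γ x.1 : ℂ))
    (hD : ∀ x : PS N, D x = -(e / (γ x.1 : ℂ)) * (x.2.2.1 : ℂ)
      + (ω : ℂ) / (γ x.1 : ℂ) ^ 2 - H x / (ω : ℂ)
      - ((C : ℂ) / ((c : ℂ) * (ω : ℂ))) * ((c₀ : ℂ) * (k : ℂ) ^ 2 - (M x : ℂ) ^ 2 / 2))
    (x : PS N) (hγne : γ x.1 ≠ 0) (hode : deriv γ x.1 + c * γ x.1 ^ 2 + C = 0) :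
    pbracket H (fun y => G y ^ (2 * n) * A y ^ (2 * m) * D y ^ m) x = 0 := by
  have hmC : (m : ℂ) ≠ 0 := by exact_mod_cast hm.ne'
  have hnC : (n : ℂ) ≠ 0 := by exact_mod_cast hn.ne'
  have hkC : (k : ℂ) = m / n := by rw [hk]; push_cast; rfl
  have hk0C : (k : ℂ) ≠ 0 := by rw [hkC]; exact div_ne_zero hmC hnC
  have hk0 : k ≠ 0 := by exact_mod_cast hk0C
  have hωC : (ω : ℂ) ≠ 0 := by exact_mod_cast hω
  have hcC : (c : ℂ) ≠ 0 := by exact_mod_cast hc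
  have hr : (Real.sqrt 2 : ℂ) ≠ 0 := by
    exact_mod_cast (Real.sqrt_pos.2 (by norm_num : (0:ℝ) < 2)).ne'
  have hg0 : (γ x.1 : ℂ) ≠ 0 := by exact_mod_cast hγne
  have hM0 : (M x : ℂ) ≠ 0 := by
    rw [hM]; exact_mod_cast mul_ne_zero hk0 (Real.sqrt_pos.2 (hLpos x)).ne'
  have hγ' : ((deriv γ x.1 : ℝ) : ℂ) = -(c * (γ x.1 : ℂ) ^ 2 + C) := by
    have : deriv γ x.1 = -(c * γ x.1 ^ 2 + C) := by linarith
    rw [this]; push_cast; ring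
  -- general statement along a curve
  have key : ∀ (φ : ℝ → PS N) (t : ℝ) (g' p' l' G' : ℂ), φ t = x →
      HasDerivAt (fun s => ((γ (φ s).1 : ℝ) : ℂ)) g' t →
      HasDerivAt (fun s => (((φ s).2.2.1 : ℝ) : ℂ)) p' t →
      DifferentiableAt ℝ (fun s => L (φ s)) t →
      deriv (fun s => (L (φ s) : ℂ)) t = l' →
      HasDerivAt (fun s => G (φ s)) G' t → 
      deriv (fun s => H (φ s)) t = 
        (x.2.2.1 * p' + γ x.1 * g' * M x ^ 2 + (γ x.1 ^ 2 + C / c) * (k ^ 2 * c * l') - ω ^ 2 * g' / γ x.1 ^ 3)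
      ∧ deriv (fun s => G (φ s) ^ (2 * n) * A (φ s) ^ (2 * m) * D (φ s) ^ m) t = 
       ((2 * n : ℕ) * G x ^ (2 * n - 1) * A x ^ (2 * m) * D x ^ m) * G' +
       (G x ^ (2 * n) * ((2 * m : ℕ) * A x ^ (2 * m - 1)) * D x ^ m) *
        ((e * p' - ω * g' / γ x.1 ^ 2 - (k ^ 2 * c * l' / M x) * γ x.1 - M x * g') / Real.sqrt 2) +
       (G x ^ (2 * n) * A x ^ (2 * m) * (m * D x ^ (m - 1))) *
        (e * g' / γ x.1 ^ 2 * x.2.2.1 - e / γ x.1 * p' - 2 * ω * g' / γ x.1 ^ 3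
        - (x.2.2.1 * p' + γ x.1 * g' * M x ^ 2 + (γ x.1 ^ 2 + C / c) * (k ^ 2 * c * l') - ω ^ 2 * g' / γ x.1 ^ 3) / ω
        + C / (c * ω) * (k ^ 2 * c * l')) := by
    intro φ t g' p' l' G' hφ hg hp hL hl hG
    have hL1 := hL.hasDerivAt
    have hl' : ((deriv (fun s => L (φ s)) t : ℝ) : ℂ) = l' := by
      rw [← hl]; exact (hL1.ofReal_comp.deriv).symm
    have hM1 := aux_M c c₀ k hk0 _ _ t hL1 (hLpos _)
    simp only [← hM, hl', hφ] at hM1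
    have hMM : (M x : ℂ) * ((k : ℂ) ^ 2 * c * l' / M x) = k ^ 2 * c * l' := by field_simp
    obtain ⟨h1, h2, h3⟩ := aux_der c C ω k c₀ e (Real.sqrt 2 : ℂ) hωC hr _ _ _ _ _ _ t hg hp hM1
      (by simpa [hφ] using hg0)
    simp only [hφ, mul_assoc _ (M x : ℂ) _, hMM] at h1 h2 h3
    have hH1 : (fun s => H (φ s)) = _ := funext fun s => hH (φ s)
    have hA1 : (fun s => A (φ s)) = _ := funext fun s => hA (φ s)
    have hD1 : (fun s => D (φ s)) = _ := funext fun s => hD (φ s)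
    simp only [hH] at hD1
    push_cast at hH1 hA1 hD1
    rw [← hA1] at h2
    rw [← hH1] at h1
    rw [← hD1] at h3
    refine ⟨h1.deriv, ?_⟩
    have := (aux_X n m _ _ _ _ _ _ t hG h2 h3).deriv
    simpa only [hφ] using this
  have hLd : Differentiable ℝ L := hLsmooth.differentiable (by simp)
  have hGd : Differentiable ℝ G := hGsmooth.differentiable (by simp)
  have hγd : Differentiable ℝ γ := hγ.differentiable (by simp)
  obtain ⟨u, q, pu, p⟩ := x
  -- the four directions
  obtain ⟨hu1, hu2⟩ := key (fun s => (s, q, pu, p)) u _ 0 0 0 rfl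
    (hγd u).hasDerivAt.ofReal_comp (hasDerivAt_const u (pu : ℂ))
    (hLd.differentiableAt.comp (f := fun s : ℝ => ((s, q, pu, p) : PS N)) u (by fun_prop))
    (by simp only [fun s => hLqp s 0 pu 0 q p, deriv_const])
    (by simp only [fun s => hGqp s 0 pu 0 q p]; exact hasDerivAt_const _ _)
  obtain ⟨hp1, hp2⟩ := key (fun s => (u, q, s, p)) pu 0 1 0 0 rfl
    (hasDerivAt_const pu (γ u : ℂ)) (by simpa using (hasDerivAt_id pu).ofReal_comp)
    (hLd.differentiableAt.comp (f := fun s : ℝ => ((u, q, s, p) : PS N)) pu (by fun_prop))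
    (by simp only [fun s => hLqp u 0 s 0 q p, deriv_const])
    (by simp only [fun s => hGqp u 0 s 0 q p]; exact hasDerivAt_const _ _)
  have dq : ∀ i, DifferentiableAt ℝ (fun s : ℝ => ((u, Function.update q i s, pu, p) : PS N)) (q i) :=
    fun i => by
      have := (hasDerivAt_update q i (q i)).differentiableAt
      fun_prop
  have dp : ∀ i, DifferentiableAt ℝ (fun s : ℝ => ((u, q, pu, Function.update p i s) : PS N)) (p i) :=
    fun i => by
      have := (hasDerivAt_update p i (p i)).differentiableAt
      fun_prop
  have kq := fun i => key (fun s => (u, Function.update q i s, pu, p)) (q i) 0 0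
    (pdq i (fun y => (L y : ℂ)) (u, q, pu, p)) (pdq i G (u, q, pu, p)) (by simp)
    (hasDerivAt_const (q i) (γ u : ℂ)) (hasDerivAt_const (q i) (pu : ℂ))
    (hLd.differentiableAt.comp (q i) (dq i)) rfl
    ((hGd.differentiableAt.comp (q i) (dq i)).hasDerivAt)
  have kp := fun i => key (fun s => (u, q, pu, Function.update p i s)) (p i) 0 0
    (pdp i (fun y => (L y : ℂ)) (u, q, pu, p)) (pdp i G (u, q, pu, p)) (by simp)
    (hasDerivAt_const (p i) (γ u : ℂ)) (hasDerivAt_const (p i) (pu : ℂ))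
    (hLd.differentiableAt.comp (p i) (dp i)) rfl
    ((hGd.differentiableAt.comp (p i) (dp i)).hasDerivAt)
  have hlad := hladder (u, q, pu, p)
  have hLu : pdu (fun y => (L y : ℂ)) (u, q, pu, p) = 0 := by
    simp only [pdu, fun s => hLqp s 0 pu 0 q p, deriv_const]
  have hLp : pdpu (fun y => (L y : ℂ)) (u, q, pu, p) = 0 := by
    simp only [pdpu, fun s => hLqp u 0 s 0 q p, deriv_const]
  simp only [XL, pbracket, hLu, hLp, zero_mul, sub_zero, zero_add] at hlad
  set X : PS N → ℂ := fun y => G y ^ (2 * n) * A y ^ (2 * m) * D y ^ m with hX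
  set x : PS N := (u, q, pu, p) with hx
  have eu1 : pdu H x = _ := hu1
  have eu2 : pdu X x = _ := hu2
  have ep1 : pdpu H x = _ := hp1
  have ep2 : pdpu X x = _ := hp2
  have eq1 : ∀ i, pdq i H x = _ := fun i => (kq i).1
  have eq2 : ∀ i, pdq i X x = _ := fun i => (kq i).2
  have eP1 : ∀ i, pdp i H x = _ := fun i => (kp i).1
  have eP2 : ∀ i, pdp i X x = _ := fun i => (kp i).2
  have hsum : ∑ i : Fin N, (pdp i H x * pdq i X x - pdq i H x * pdp i X x) =
      ((γ u ^ 2 + C / c) * (k ^ 2 * c)) * ((2 * n : ℕ) * G x ^ (2 * n - 1) * A x ^ (2 * m) * D x ^ m) *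
      (e / k * M x * G x) := by
    rw [← hlad, Finset.mul_sum]
    refine Finset.sum_congr rfl fun i _ => ?_
    rw [eq1, eq2, eP1, eP2]
    ring
  rw [pbracket, hsum, eu1, eu2, ep1, ep2]
  have hHx := hH x
  have hAx := hA x
  have hDx := hD x
  rw [hHx] at hDx
  push_cast at hDx
  simp only [hx] at hγ' hAx hDx hg0 ⊢
  simp only [← hx] at hAx hDx ⊢
  rw [hγ']
  have hnG : G x ^ (2 * n) = G x ^ (2 * n - 1) * G x := by
    rw [← pow_succ]; congr 1; omega
  have hmA : A x ^ (2 * m) = A x ^ (2 * m - 1) * A x := by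
    rw [← pow_succ]; congr 1; omega
  have hmD : D x ^ m = D x ^ (m - 1) * D x := by
    rw [← pow_succ]; congr 1; omega
  rw [hnG, hmA, hmD]
  set g : ℂ := (γ u : ℂ)
  set f : ℂ := c * g ^ 2 + C with hf
  clear_value f
  have hA2 : (pu : ℂ) * ((ω * f / g ^ 2 + M x * f) / Real.sqrt 2)
      + (g * f * M x ^ 2 - ω ^ 2 * f / g ^ 3) * (e / Real.sqrt 2)
      = -e * f * (ω / g ^ 2 + M x) * A x := by
    rw [hAx]
    field_simp
    linear_combination (f * pu * g) * (ω + M x * g ^ 2) * he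
  have hD2 : (pu : ℂ) * (-e * f / g ^ 2 * pu + 2 * ω * f / g ^ 3)
      + (g * f * M x ^ 2 - ω ^ 2 * f / g ^ 3) * (- e / g)
      = 2 * e * ω * f / g ^ 2 * D x := by
    rw [hDx]
    field_simp
    linear_combination (2 * pu * f * g * ω * c) * he
  have hfk : ((g ^ 2 + C / c) * (k ^ 2 * c)) * (2 * n) * (e / k * M x) = 2 * m * e * f * M x := by
    rw [hf, hkC]
    field_simp
  push_cast
  linear_combination (G x ^ (2 * n - 1) * G x * (2 * m * A x ^ (2 * m - 1)) * (D x ^ (m - 1) * D x)) * hA2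
    + (G x ^ (2 * n - 1) * G x * (A x ^ (2 * m - 1) * A x) * (m * D x ^ (m - 1))) * hD2
    + (G x ^ (2 * n - 1) * G x * (A x ^ (2 * m - 1) * A x) * (D x ^ (m - 1) * D x)) * hfk

/-- Kuru–Negro style factorized first integrals
`X^± = (G^±)^{2n}(A^∓)^{2m}(D^±)^m` of the extension
`H = ½p_u² + ½(γ² + C/c)M² + ω²/(2γ²) - (C/c)k²c₀`. -/
theorem kuru_negro_factorized_integrals
    (N : ℕ) (hN : 1 ≤ N) (c c₀ C ω : ℝ) (hc : c ≠ 0) (hω : ω ≠ 0)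
    (m n : ℕ) (hm : 0 < m) (hn : 0 < n) (k : ℝ) (hk : k = (m : ℝ) / (n : ℝ))
    (L : PS N → ℝ) (hLsmooth : ContDiff ℝ (⊤ : ℕ∞) L)
    (hLqp : ∀ (u u' pu pu' : ℝ) (q p : Fin N → ℝ),
      L (u, q, pu, p) = L (u', q, pu', p))
    (hLpos : ∀ x : PS N, 0 < 2 * (c * L x + c₀))
    (M : PS N → ℝ) (hM : ∀ x : PS N, M x = k * Real.sqrt (2 * (c * L x + c₀)))
    (I : Set ℝ) (hIopen : IsOpen I) (hIconn : I.OrdConnected) (hInonempty : I.Nonempty)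
    (γ : ℝ → ℝ) (hγ : ContDiff ℝ (⊤ : ℕ∞) γ) (hγne : ∀ u ∈ I, γ u ≠ 0)
    (hode : ∀ u ∈ I, deriv γ u + c * γ u ^ 2 + C = 0)
    (Gp Gm : PS N → ℂ) (hGpsmooth : ContDiff ℝ (⊤ : ℕ∞) Gp) (hGmsmooth : ContDiff ℝ (⊤ : ℕ∞) Gm)
    (hGpqp : ∀ (u u' pu pu' : ℝ) (q p : Fin N → ℝ),
      Gp (u, q, pu, p) = Gp (u', q, pu', p))
    (hGmqp : ∀ (u u' pu pu' : ℝ) (q p : Fin N → ℝ),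
      Gm (u, q, pu, p) = Gm (u', q, pu', p))
    (hGpladder : ∀ x : PS N,
      XL (fun y => (L y : ℂ)) Gp x = (Complex.I / (k : ℂ)) * (M x : ℂ) * Gp x)
    (hGmladder : ∀ x : PS N,
      XL (fun y => (L y : ℂ)) Gm x = -((Complex.I / (k : ℂ)) * (M x : ℂ)) * Gm x)
    (H : PS N → ℂ)
    (hH : ∀ x : PS N, H x =
      (((1 / 2) * x.2.2.1 ^ 2 + (1 / 2) * (γ x.1 ^ 2 + C / c) * M x ^ 2
        + ω ^ 2 / (2 * γ x.1 ^ 2) - (C / c) * k ^ 2 * c₀ : ℝ) : ℂ))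
    (Ap Am : PS N → ℂ)
    (hAp : ∀ x : PS N, Ap x = -(Complex.I / (Real.sqrt 2 : ℂ)) * (x.2.2.1 : ℂ)
      + (ω : ℂ) / ((Real.sqrt 2 : ℂ) * (γ x.1 : ℂ)) - ((M x : ℂ) / (Real.sqrt 2 : ℂ)) * (γ x.1 : ℂ))
    (hAm : ∀ x : PS N, Am x = (Complex.I / (Real.sqrt 2 : ℂ)) * (x.2.2.1 : ℂ)
      + (ω : ℂ) / ((Real.sqrt 2 : ℂ) * (γ x.1 : ℂ)) - ((M x : ℂ) / (Real.sqrt 2 : ℂ)) * (γ x.1 : ℂ))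
    (Dp Dm : PS N → ℂ)
    (hDp : ∀ x : PS N, Dp x = -(Complex.I / (γ x.1 : ℂ)) * (x.2.2.1 : ℂ)
      + (ω : ℂ) / (γ x.1 : ℂ) ^ 2 - H x / (ω : ℂ)
      - ((C : ℂ) / ((c : ℂ) * (ω : ℂ))) * ((c₀ : ℂ) * (k : ℂ) ^ 2 - (M x : ℂ) ^ 2 / 2))
    (hDm : ∀ x : PS N, Dm x = (Complex.I / (γ x.1 : ℂ)) * (x.2.2.1 : ℂ)
      + (ω : ℂ) / (γ x.1 : ℂ) ^ 2 - H x / (ω : ℂ)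
      - ((C : ℂ) / ((c : ℂ) * (ω : ℂ))) * ((c₀ : ℂ) * (k : ℂ) ^ 2 - (M x : ℂ) ^ 2 / 2)) :
    (∀ x : PS N, x.1 ∈ I →
      pbracket H (fun y => Gp y ^ (2 * n) * Am y ^ (2 * m) * Dp y ^ m) x = 0) ∧
    (∀ x : PS N, x.1 ∈ I →
      pbracket H (fun y => Gm y ^ (2 * n) * Ap y ^ (2 * m) * Dm y ^ m) x = 0) := by
  constructor
  · intro x hx
    exact aux_main N c c₀ C ω hc hω m n hm hn k hk L hLsmooth hLqp hLpos M hM γ hγ Complex.I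
      (by simp) Gp hGpsmooth hGpqp hGpladder H hH Am Dp hAm hDp x (hγne _ hx) (hode _ hx)
  · intro x hx
    refine aux_main N c c₀ C ω hc hω m n hm hn k hk L hLsmooth hLqp hLpos M hM γ hγ (-Complex.I)
      (by simp) Gm hGmsmooth hGmqp ?_ H hH Ap Dm ?_ ?_ x (hγne _ hx) (hode _ hx)
    · intro y; rw [hGmladder]; ring
    · intro y; rw [hAp]; ring
    · intro y; rw [hDm]; ring
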